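/- arXiv:2107.11619 — 4 statements merged into one kernel-verified Lean document; each statement's English description precedes it below -/
import Mathlib

section
/- Let d ≥ 1, L > 0, and let U : ℝ^d → ℝ be continuous and nonnegative with min_{x ∈ [−L,L]^d} U(x) = 0. Define H(x,y) = U(x) + |y|²/2 for (x,y) ∈ ℝ^d × ℝ^d. Fix real numbers 0 < α < δ. Then there exists C > 0 such that for all β > 0, ∫_{[−L,L]^d × ℝ^d} 1_{{H ≥ δ}}(x,y) e^{−β H(x,y)} dx dy ≤ C e^{−β(δ−α)} ∫_{[−L,L]^d × ℝ^d} e^{−β H(x,y)} dx dy; in particular, the Gibbs probability measure μ_β on [−L,L]^d × ℝ^d with density proportional to e^{−βH} satisfies μ_β({H ≥ δ}) ≤ C e^{−β(δ−α)} for all β > 0. -/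
open MeasureTheory Real Set

/-- The box `[-L, L]^d` in `ℝ^d`. -/
def boxSet (d : ℕ) (L : ℝ) : Set (EuclideanSpace ℝ (Fin d)) :=
  {x | ∀ i, x i ∈ Set.Icc (-L) L}

/-!
Write `Z β = ∫ exp (-β H)`. On `{δ ≤ H}` the weight at `β ≥ 1` is at most `exp (-(β - 1) δ)` times
the weight at `1`, so the tail is at most `exp (-(β - 1) δ) Z 1`. On the other hand, Markov's
inequality gives `exp (-β α) m ≤ Z β`, where `m` is the measure of `{H ≤ α}`; it is positive because
`{H < α}` meets the interior of the domain. Dividing the two bounds gives the decay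
`exp (-β (δ - α))` with the constant `exp δ Z 1 / m`. For `β ≤ 1` the tail is at most `Z β` and
`exp (-β (δ - α))` is bounded below.
-/

section ExponentialWeights

variable {X : Type*} {f : X → ℝ} {α β γ δ : ℝ}

theorem setOf_exp_neg_mul_le_exp_neg_mul (hβ : 0 < β) :
    {z | exp (-β * α) ≤ exp (-β * f z)} = {z | f z ≤ α} := by
  simp [hβ]

variable [MeasurableSpace X] {μ : Measure X}

theorem integral_indicator_exp_neg_mul_le (hγ : Integrable (fun z ↦ exp (-γ * f z)) μ)
    (hγβ : γ ≤ β) :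
    ∫ z, indicator {w | δ ≤ f w} (fun w ↦ exp (-β * f w)) z ∂μ
      ≤ exp (-(β - γ) * δ) * ∫ z, exp (-γ * f z) ∂μ := by
  rw [← integral_const_mul]
  refine integral_mono_of_nonneg (.of_forall <| indicator_nonneg fun z _ ↦ (exp_pos _).le)
    (hγ.const_mul _) (.of_forall <| indicator_le' (fun z (hz : δ ≤ f z) ↦ ?_)
      fun z _ ↦ by positivity)
  rw [← exp_add, exp_le_exp]
  linarith [mul_le_mul_of_nonneg_left hz (sub_nonneg.2 hγβ)]

theorem exp_neg_mul_mul_measureReal_le_integral (hβ : 0 < β)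
    (hint : Integrable (fun z ↦ exp (-β * f z)) μ) :
    exp (-β * α) * μ.real {z | f z ≤ α} ≤ ∫ z, exp (-β * f z) ∂μ := by
  rw [← setOf_exp_neg_mul_le_exp_neg_mul hβ]
  exact mul_meas_ge_le_integral_of_nonneg (.of_forall fun z ↦ (exp_pos _).le) hint _

theorem measureReal_setOf_le_pos (hβ : 0 < β) (hint : Integrable (fun z ↦ exp (-β * f z)) μ)
    (hα : μ {z | f z ≤ α} ≠ 0) : 0 < μ.real {z | f z ≤ α} := by
  refine ENNReal.toReal_pos hα ?_
  rw [← setOf_exp_neg_mul_le_exp_neg_mul hβ]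
  exact (hint.measure_ge_lt_top (exp_pos _)).ne

theorem integral_indicator_exp_neg_mul_le_mul_integral (hβ : 0 < β) (hγβ : γ ≤ β)
    (hγint : Integrable (fun z ↦ exp (-γ * f z)) μ)
    (hβint : Integrable (fun z ↦ exp (-β * f z)) μ) (hα : μ {z | f z ≤ α} ≠ 0) :
    ∫ z, indicator {w | δ ≤ f w} (fun w ↦ exp (-β * f w)) z ∂μ
      ≤ exp (γ * δ) * (∫ z, exp (-γ * f z) ∂μ) / μ.real {z | f z ≤ α} * exp (-β * (δ - α)) *
        ∫ z, exp (-β * f z) ∂μ := by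
  set m := μ.real {z | f z ≤ α}
  have hm : 0 < m := measureReal_setOf_le_pos hβ hβint hα
  have hexp : exp (-(β - γ) * δ) = exp (γ * δ) * exp (-β * (δ - α)) * exp (-β * α) := by
    rw [← exp_add, ← exp_add]
    ring_nf
  calc
    _ ≤ exp (-(β - γ) * δ) * ∫ z, exp (-γ * f z) ∂μ := integral_indicator_exp_neg_mul_le hγint hγβ
    _ = exp (γ * δ) * (∫ z, exp (-γ * f z) ∂μ) / m * exp (-β * (δ - α)) * (exp (-β * α) * m) := by
      rw [hexp]
      field_simp
    _ ≤ _ := by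
      gcongr
      exact exp_neg_mul_mul_measureReal_le_integral hβ hβint

theorem exists_integral_indicator_exp_neg_mul_le
    (hint : ∀ β > 0, Integrable (fun z ↦ exp (-β * f z)) μ) (hαδ : α ≤ δ)
    (hα : μ {z | f z ≤ α} ≠ 0) :
    ∃ C > 0, ∀ β > 0, ∫ z, indicator {w | δ ≤ f w} (fun w ↦ exp (-β * f w)) z ∂μ
      ≤ C * exp (-β * (δ - α)) * ∫ z, exp (-β * f z) ∂μ := by
  set C₁ := exp (1 * δ) * (∫ z, exp (-1 * f z) ∂μ) / μ.real {z | f z ≤ α}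
  refine ⟨max (exp (δ - α)) C₁, lt_max_of_lt_left (exp_pos _), fun β hβ ↦ ?_⟩
  have hZ : 0 ≤ ∫ z, exp (-β * f z) ∂μ := integral_nonneg fun z ↦ (exp_pos _).le
  rcases le_total β 1 with hβ₁ | hβ₁
  · have hone : 1 ≤ exp (δ - α) * exp (-β * (δ - α)) := by
      rw [← exp_add, one_le_exp_iff]
      linarith [mul_nonneg (sub_nonneg.2 hβ₁) (sub_nonneg.2 hαδ)]
    calc
      _ ≤ ∫ z, exp (-β * f z) ∂μ := by
        simpa using integral_indicator_exp_neg_mul_le (δ := δ) (hint β hβ) le_rfl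
      _ ≤ exp (δ - α) * exp (-β * (δ - α)) * ∫ z, exp (-β * f z) ∂μ :=
        le_mul_of_one_le_left hZ hone
      _ ≤ _ := by
        gcongr
        exact le_max_left _ _
  · calc
      _ ≤ C₁ * exp (-β * (δ - α)) * ∫ z, exp (-β * f z) ∂μ :=
        integral_indicator_exp_neg_mul_le_mul_integral hβ hβ₁ (hint 1 one_pos) (hint β hβ) hα
      _ ≤ _ := by
        gcongr
        exact le_max_right _ _

end ExponentialWeights

theorem measure_restrict_setOf_lt_pos {X R : Type*} [TopologicalSpace X] [MeasurableSpace X]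
    {μ : Measure X} [μ.IsOpenPosMeasure] [TopologicalSpace R] [LinearOrder R] [ClosedIciTopology R]
    {s : Set X} {f : X → R} {a : R} {x : X} (hf : ContinuousWithinAt f s x)
    (hx : x ∈ closure (interior s)) (hfx : f x < a) : 0 < μ.restrict s {z | f z < a} := by
  obtain ⟨u, hu, hxu, hus⟩ := mem_nhdsWithin.1 (hf.eventually_lt_const hfx)
  calc
    0 < μ (u ∩ interior s) :=
      (hu.inter isOpen_interior).measure_pos μ (mem_closure_iff.1 hx u hu hxu)
    _ ≤ μ ({z | f z < a} ∩ s) :=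
      measure_mono fun z hz ↦ ⟨hus ⟨hz.1, interior_subset hz.2⟩, interior_subset hz.2⟩
    _ ≤ μ.restrict s {z | f z < a} := Measure.le_restrict_apply _ _

section KineticEnergy

variable {F : Type*} [NormedAddCommGroup F] [InnerProductSpace ℝ F] [FiniteDimensional ℝ F]
  [MeasurableSpace F] [BorelSpace F]

theorem integrable_exp_neg_mul_norm_sq {b : ℝ} (hb : 0 < b) :
    Integrable fun v : F ↦ exp (-b * ‖v‖ ^ 2) := by
  have hcexp := GaussianFourier.integrable_cexp_neg_mul_sq_norm_add (b := b) (by simpa) 0 (0 : F)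
  simpa [Complex.norm_exp, ← Complex.ofReal_pow] using hcexp.norm

variable {E : Type*} [TopologicalSpace E] [T2Space E] [MeasurableSpace E] [BorelSpace E]
  {μ : Measure E} [IsFiniteMeasureOnCompacts μ] [SFinite μ] {K : Set E} {U : E → ℝ}

theorem integrableOn_exp_neg_mul_add_norm_sq (hK : IsCompact K) (hU : ContinuousOn U K) {β : ℝ}
    (hβ : 0 < β) :
    IntegrableOn (fun z : E × F ↦ exp (-β * (U z.1 + ‖z.2‖ ^ 2 / 2))) (K ×ˢ univ)
      (μ.prod volume) := by
  have hpotential : IntegrableOn (fun x ↦ exp (-β * U x)) K μ :=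
    ContinuousOn.integrableOn_compact hK (by fun_prop)
  have hkinetic : Integrable fun y : F ↦ exp (-(β / 2) * ‖y‖ ^ 2) :=
    integrable_exp_neg_mul_norm_sq (by positivity)
  rw [IntegrableOn, ← Measure.prod_restrict, Measure.restrict_univ]
  convert! hpotential.mul_prod hkinetic using 2 with z
  rw [← exp_add]
  ring_nf

theorem stmt_0_general [μ.IsOpenPosMeasure] (hK : IsCompact K)
    (hKint : K ⊆ closure (interior K)) (hU : ContinuousOn U K) {α δ : ℝ}
    (hα : ∃ x ∈ K, U x < α) (hαδ : α ≤ δ) {H : E × F → ℝ}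
    (hH : ∀ z, H z = U z.1 + ‖z.2‖ ^ 2 / 2) :
    ∃ C > 0, ∀ β > 0,
      ∫ z in K ×ˢ univ, indicator {w | δ ≤ H w} (fun w ↦ exp (-β * H w)) z ∂μ.prod volume
      ≤ C * exp (-β * (δ - α)) * ∫ z in K ×ˢ univ, exp (-β * H z) ∂μ.prod volume := by
  obtain rfl : H = fun z ↦ U z.1 + ‖z.2‖ ^ 2 / 2 := funext hH
  obtain ⟨x, hxK, hx⟩ := hα
  have hHcont : ContinuousOn (fun z : E × F ↦ U z.1 + ‖z.2‖ ^ 2 / 2) (K ×ˢ univ) :=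
    (hU.comp continuousOn_fst fun z hz ↦ hz.1).add (by fun_prop)
  have hclosure : (x, (0 : F)) ∈ closure (interior (K ×ˢ univ)) := by
    simpa [interior_prod_eq, closure_prod_eq] using hKint hxK
  have hpos : 0 < (μ.prod volume).restrict (K ×ˢ univ)
      {z : E × F | U z.1 + ‖z.2‖ ^ 2 / 2 < α} :=
    measure_restrict_setOf_lt_pos (hHcont (x, 0) ⟨hxK, mem_univ _⟩) hclosure (by simpa using hx)
  exact exists_integral_indicator_exp_neg_mul_le
    (fun β hβ ↦ integrableOn_exp_neg_mul_add_norm_sq hK hU hβ) hαδ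
    (hpos.trans_le (measure_mono <| ofPred_subset_ofPred.2 fun _ ↦ le_of_lt)).ne'

end KineticEnergy

section Box

variable (d : ℕ) (L : ℝ)

theorem boxSet_eq_preimage_pi_Icc :
    boxSet d L = (PiLp.homeomorph 2 fun _ : Fin d ↦ ℝ) ⁻¹' univ.pi fun _ ↦ Icc (-L) L := by
  ext x
  simp only [mem_preimage, mem_univ_pi]
  rfl

theorem isCompact_boxSet : IsCompact (boxSet d L) := by
  rw [boxSet_eq_preimage_pi_Icc, Homeomorph.isCompact_preimage]
  exact isCompact_univ_pi fun _ ↦ isCompact_Icc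

variable {L}

theorem closure_interior_boxSet (hL : 0 < L) : closure (interior (boxSet d L)) = boxSet d L := by
  have hne : -L ≠ L := by linarith
  simp only [boxSet_eq_preimage_pi_Icc, ← Homeomorph.preimage_interior,
    ← Homeomorph.preimage_closure, interior_pi_set finite_univ, interior_Icc, closure_pi_set,
    closure_Ioo hne]

end Box

theorem stmt_0 (d : ℕ) (hd : 1 ≤ d) (L : ℝ) (hL : 0 < L)
    (U : EuclideanSpace ℝ (Fin d) → ℝ) (hUcont : Continuous U)
    (hUnonneg : ∀ x, 0 ≤ U x)
    (hUmin : ∃ x₀ ∈ boxSet d L, U x₀ = 0)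
    (α δ : ℝ) (hα : 0 < α) (hαδ : α < δ)
    (H : EuclideanSpace ℝ (Fin d) × EuclideanSpace ℝ (Fin d) → ℝ)
    (hH : ∀ z, H z = U z.1 + ‖z.2‖ ^ 2 / 2) :
    ∃ C > 0, ∀ β > 0,
      (∫ z in (boxSet d L) ×ˢ (Set.univ : Set (EuclideanSpace ℝ (Fin d))),
          Set.indicator {w | δ ≤ H w} (fun w => Real.exp (-β * H w)) z)
      ≤ C * Real.exp (-β * (δ - α)) *
        ∫ z in (boxSet d L) ×ˢ (Set.univ : Set (EuclideanSpace ℝ (Fin d))),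
          Real.exp (-β * H z) :=
  stmt_0_general (isCompact_boxSet d L) (closure_interior_boxSet d hL).ge hUcont.continuousOn
    (hUmin.imp fun _ hx ↦ ⟨hx.1, hx.2.trans_lt hα⟩) hαδ.le hH
end

section
/- Let d ≥ 1 and β ≥ 1. For every function g : ℝ^d → ℝ of class C¹ such that ∫_{ℝ^d} g(y)² e^{−β|y|²/2} dy < ∞ and ∫_{ℝ^d} |∇g(y)|² e^{−β|y|²/2} dy < ∞, one has ∫_{ℝ^d} |y|² g(y)² e^{−β|y|²/2} dy ≤ (2d/β) ∫_{ℝ^d} g(y)² e^{−β|y|²/2} dy + (4/β²) ∫_{ℝ^d} |∇g(y)|² e^{−β|y|²/2} dy (in particular the left-hand side is finite). -/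
open MeasureTheory Real

/-!
Write `w = exp (-β ‖y‖² / 2)`. Since `∂ᵥ w = -β ⟪v, y⟫ w`, integrating `⟪v, y⟫ g² w` by parts in the
direction of a unit vector `v` gives `β ∫ ⟪v, y⟫² g² w = ∫ g² w + 2 ∫ ⟪v, y⟫ g ∂ᵥg w`. Young's
inequality absorbs half of the left-hand side, and summing over an orthonormal basis yields the
bound as soon as the second moment is known to be finite. It is finite for every `γ > β`, and
monotone convergence as `γ ↓ β` removes this assumption.
-/

open Filter Topology
open scoped RealInnerProductSpace Gradient

/-- The unnormalized density `exp (-β ‖y‖² / 2)` of the centred Gaussian with precision `β`. -/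
noncomputable def gaussianWeight {E : Type*} [NormedAddCommGroup E] (β : ℝ) (y : E) : ℝ :=
  exp (-β * ‖y‖ ^ 2 / 2)

namespace gaussianWeight

section Norm

variable {E : Type*} [NormedAddCommGroup E]

lemma pos (β : ℝ) (y : E) : 0 < gaussianWeight β y := exp_pos _

@[fun_prop]
lemma continuous (β : ℝ) : Continuous (gaussianWeight β : E → ℝ) := by
  unfold gaussianWeight
  fun_prop

lemma antitone (y : E) : Antitone fun β => gaussianWeight β y := fun β γ hβγ => by
  simp only [gaussianWeight]
  gcongr

lemma mul_weight_sub (β γ : ℝ) (y : E) :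
    gaussianWeight β y * gaussianWeight (γ - β) y = gaussianWeight γ y := by
  simp only [gaussianWeight, ← exp_add]
  ring_nf

lemma le_one {δ : ℝ} (hδ : 0 ≤ δ) (y : E) : gaussianWeight δ y ≤ 1 := by
  simpa [gaussianWeight] using antitone y hδ

lemma norm_sq_mul_le {δ : ℝ} (hδ : 0 < δ) (y : E) :
    ‖y‖ ^ 2 * gaussianWeight δ y ≤ 2 / δ := by
  have hexp : δ / 2 * ‖y‖ ^ 2 * gaussianWeight δ y ≤ 1 := by
    have hexponent : -δ * ‖y‖ ^ 2 / 2 = -(δ / 2 * ‖y‖ ^ 2) := by ring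
    rw [gaussianWeight, hexponent]
    exact (mul_exp_neg_le_exp_neg_one _).trans (exp_le_one_iff.2 (by simp))
  rw [le_div_iff₀ hδ]
  linarith

section Integrability

variable [MeasurableSpace E] [OpensMeasurableSpace E] {μ : Measure E} {f : E → ℝ} {β γ : ℝ}

lemma integrable_mul_of_le (hβγ : β ≤ γ) (hf : Integrable (fun y => f y * gaussianWeight β y) μ) :
    Integrable (fun y => f y * gaussianWeight γ y) μ := by
  simp_rw [← mul_weight_sub β γ, ← mul_assoc]
  refine hf.mul_bdd (c := 1) (by fun_prop) (ae_of_all _ fun y => ?_)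
  rw [norm_of_nonneg (pos _ y).le]
  exact le_one (sub_nonneg.2 hβγ) y

lemma integrable_norm_sq_mul_of_lt (hβγ : β < γ)
    (hf : Integrable (fun y => f y * gaussianWeight β y) μ) :
    Integrable (fun y => ‖y‖ ^ 2 * f y * gaussianWeight γ y) μ := by
  have hsplit (y : E) : ‖y‖ ^ 2 * f y * gaussianWeight γ y =
      f y * gaussianWeight β y * (‖y‖ ^ 2 * gaussianWeight (γ - β) y) := by
    rw [← mul_weight_sub β γ]
    ring
  simp_rw [hsplit]
  refine hf.mul_bdd (c := 2 / (γ - β)) (by fun_prop) (ae_of_all _ fun y => ?_)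
  rw [norm_of_nonneg (mul_nonneg (by positivity) (pos _ y).le)]
  exact norm_sq_mul_le (sub_pos.2 hβγ) y

lemma lintegral_mul_le_of_forall_gt (hf : AEMeasurable f μ) (hf0 : ∀ y, 0 ≤ f y) {C : ENNReal}
    (hC : ∀ γ > β, ∫⁻ y, ENNReal.ofReal (f y * gaussianWeight γ y) ∂μ ≤ C) :
    ∫⁻ y, ENNReal.ofReal (f y * gaussianWeight β y) ∂μ ≤ C := by
  obtain ⟨γ, hγ_anti, hγ_gt, hγ_lim⟩ := exists_seq_strictAnti_tendsto β
  have hmono (y : E) : Monotone fun n => ENNReal.ofReal (f y * gaussianWeight (γ n) y) :=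
    fun m n hmn => ENNReal.ofReal_le_ofReal
      (mul_le_mul_of_nonneg_left (antitone y (hγ_anti.antitone hmn)) (hf0 y))
  have hlim (y : E) : Tendsto (fun n => ENNReal.ofReal (f y * gaussianWeight (γ n) y)) atTop
      (𝓝 (ENNReal.ofReal (f y * gaussianWeight β y))) := by
    have hcont : Continuous fun δ : ℝ => f y * gaussianWeight δ y := by
      unfold gaussianWeight
      fun_prop
    exact ENNReal.tendsto_ofReal ((hcont.tendsto β).comp hγ_lim)
  exact le_of_tendsto' (lintegral_tendsto_of_tendsto_of_monotone (fun n => by fun_prop)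
    (ae_of_all _ hmono) (ae_of_all _ hlim)) fun n => hC (γ n) (hγ_gt n)

end Integrability

end Norm

section InnerProduct

variable {E : Type*} [NormedAddCommGroup E] [InnerProductSpace ℝ E]

lemma hasFDerivAt (β : ℝ) (y : E) :
    HasFDerivAt (gaussianWeight β) (-(β * gaussianWeight β y) • innerSL ℝ y) y := by
  have h := ((hasStrictFDerivAt_norm_sq y).hasFDerivAt.const_mul (-β / 2)).exp
  have hexponent (x : E) : -β / 2 * ‖x‖ ^ 2 = -β * ‖x‖ ^ 2 / 2 := by ring
  simp only [hexponent] at h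
  refine h.congr_fderiv (ContinuousLinearMap.ext fun v => ?_)
  simp only [gaussianWeight, neg_apply, smul_apply, nsmul_eq_mul, smul_eq_mul, neg_smul,
    Nat.cast_ofNat, coe_innerSL_apply]
  ring

lemma fderiv_apply (β : ℝ) (v y : E) :
    fderiv ℝ (gaussianWeight β) y v = -β * (⟪v, y⟫ * gaussianWeight β y) := by
  rw [(hasFDerivAt β y).fderiv]
  simp only [neg_apply, smul_apply, neg_smul, smul_eq_mul, coe_innerSL_apply,
    real_inner_comm v y]
  ring

theorem integral_inner_mul_smul [MeasurableSpace E] [BorelSpace E] [FiniteDimensional ℝ E]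
    {F : Type*} [NormedAddCommGroup F] [NormedSpace ℝ F] {μ : Measure E} [μ.IsAddHaarMeasure]
    {β : ℝ} {f : E → F} {v : E} (hf : Differentiable ℝ f)
    (hf_int : Integrable (fun y => gaussianWeight β y • f y) μ)
    (hvf_int : Integrable (fun y => (⟪v, y⟫ * gaussianWeight β y) • f y) μ)
    (hf'_int : Integrable (fun y => gaussianWeight β y • fderiv ℝ f y v) μ) :
    β • ∫ y, (⟪v, y⟫ * gaussianWeight β y) • f y ∂μ =
      ∫ y, gaussianWeight β y • fderiv ℝ f y v ∂μ := by
  have hparts := integral_smul_fderiv_eq_neg_fderiv_smul_of_integrable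
    (by simpa only [fderiv_apply, mul_smul] using! hvf_int.smul (-β)) hf'_int hf_int
    (fun y _ => (hasFDerivAt β y).differentiableAt) (fun y _ => hf y)
  rw [hparts]
  simp only [fderiv_apply, mul_smul, integral_smul, integral_neg, neg_smul, neg_neg]

end InnerProduct

end gaussianWeight

lemma integrable_mul_mul_of_integrable_sq_mul {α : Type*} {m : MeasurableSpace α} {μ : Measure α}
    {a b w : α → ℝ} (hw : ∀ x, 0 ≤ w x) (habw : AEStronglyMeasurable (fun x => a x * b x * w x) μ)
    (ha : Integrable (fun x => a x ^ 2 * w x) μ) (hb : Integrable (fun x => b x ^ 2 * w x) μ) :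
    Integrable (fun x => a x * b x * w x) μ := by
  refine (ha.add hb).mono' habw (ae_of_all _ fun x => ?_)
  have hab : |a x * b x| ≤ a x ^ 2 + b x ^ 2 := by
    rw [abs_le]
    constructor <;> nlinarith [sq_nonneg (a x + b x), sq_nonneg (a x - b x)]
  calc ‖a x * b x * w x‖ = |a x * b x| * w x := by
        rw [norm_mul, norm_eq_abs, norm_of_nonneg (hw x)]
    _ ≤ (a x ^ 2 + b x ^ 2) * w x := mul_le_mul_of_nonneg_right hab (hw x)
    _ = a x ^ 2 * w x + b x ^ 2 * w x := add_mul ..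

lemma two_mul_integral_mul_le {α : Type*} {m : MeasurableSpace α} {μ : Measure α}
    {a b w : α → ℝ} {ε : ℝ} (hε : 0 < ε) (hw : ∀ x, 0 ≤ w x)
    (habw : AEStronglyMeasurable (fun x => a x * b x * w x) μ)
    (ha : Integrable (fun x => a x ^ 2 * w x) μ) (hb : Integrable (fun x => b x ^ 2 * w x) μ) :
    2 * ∫ x, a x * b x * w x ∂μ ≤
      ε * ∫ x, a x ^ 2 * w x ∂μ + ε⁻¹ * ∫ x, b x ^ 2 * w x ∂μ := by
  have hab := integrable_mul_mul_of_integrable_sq_mul hw habw ha hb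
  simp only [← integral_const_mul]
  rw [← integral_add (ha.const_mul ε) (hb.const_mul ε⁻¹)]
  refine integral_mono (hab.const_mul 2) ((ha.const_mul ε).add (hb.const_mul ε⁻¹)) fun x => ?_
  calc 2 * (a x * b x * w x) = 2 * a x * b x * w x := by ring
    _ ≤ (ε * a x ^ 2 + ε⁻¹ * b x ^ 2) * w x :=
        mul_le_mul_of_nonneg_right (two_mul_le_add_mul_sq hε) (hw x)
    _ = ε * (a x ^ 2 * w x) + ε⁻¹ * (b x ^ 2 * w x) := by ring

section InnerProduct

variable {E : Type*} [NormedAddCommGroup E] [InnerProductSpace ℝ E]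

lemma integrable_inner_sq_mul {α : Type*} {m : MeasurableSpace α} {μ : Measure α} {u : α → E}
    {w : α → ℝ} (v : E) (hu : AEStronglyMeasurable u μ) (hw : AEStronglyMeasurable w μ)
    (h : Integrable (fun x => ‖u x‖ ^ 2 * w x) μ) :
    Integrable (fun x => ⟪v, u x⟫ ^ 2 * w x) μ := by
  refine (h.const_mul (‖v‖ ^ 2)).mono (by fun_prop) (ae_of_all _ fun x => ?_)
  have hinner : ⟪v, u x⟫ ^ 2 ≤ ‖v‖ ^ 2 * ‖u x‖ ^ 2 := by
    simpa only [← sq, real_inner_self_eq_norm_sq] using real_inner_mul_inner_self_le v (u x)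
  simp only [norm_mul, norm_pow, norm_norm, ← mul_assoc]
  gcongr
  simpa only [norm_eq_abs, sq_abs] using hinner

lemma fderiv_inner_mul_sq_apply [CompleteSpace E] {g : E → ℝ} {y : E}
    (hg : DifferentiableAt ℝ g y) (v : E) :
    fderiv ℝ (fun y => ⟪v, y⟫ * g y ^ 2) y v =
      ‖v‖ ^ 2 * g y ^ 2 + 2 * (⟪v, y⟫ * g y * ⟪v, ∇ g y⟫) := by
  have h : HasFDerivAt (fun y => ⟪v, y⟫ * g y ^ 2) _ y :=
    (innerSL ℝ v).hasFDerivAt.mul (hg.hasFDerivAt.pow 2)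
  rw [h.fderiv, inner_gradient_right]
  simp only [add_apply, smul_apply, nsmul_eq_mul, smul_eq_mul, Nat.cast_ofNat, coe_innerSL_apply,
    real_inner_self_eq_norm_sq, conj_trivial]
  ring

variable [MeasurableSpace E] [BorelSpace E]

lemma measurable_gradient [CompleteSpace E] (g : E → ℝ) : Measurable (∇ g) :=
  (InnerProductSpace.toDual ℝ E).symm.continuous.measurable.comp (measurable_fderiv ℝ g)

variable [FiniteDimensional ℝ E] {μ : Measure E} [μ.IsAddHaarMeasure] {β : ℝ} {g : E → ℝ}

lemma integral_inner_mul_sq_mul_gaussianWeight_eq (hg : Differentiable ℝ g) (v : E)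
    (hg_int : Integrable (fun y => g y ^ 2 * gaussianWeight β y) μ)
    (hmom : Integrable (fun y => (⟪v, y⟫ * g y) ^ 2 * gaussianWeight β y) μ)
    (hgrad : Integrable (fun y => ⟪v, ∇ g y⟫ ^ 2 * gaussianWeight β y) μ) :
    β * ∫ y, (⟪v, y⟫ * g y) ^ 2 * gaussianWeight β y ∂μ =
      ‖v‖ ^ 2 * ∫ y, g y ^ 2 * gaussianWeight β y ∂μ +
        2 * ∫ y, ⟪v, y⟫ * g y * ⟪v, ∇ g y⟫ * gaussianWeight β y ∂μ := by
  have hgc : Continuous g := hg.continuous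
  have hg' : AEStronglyMeasurable (∇ g) μ := (measurable_gradient g).aestronglyMeasurable
  have hw (y : E) : 0 ≤ gaussianWeight β y := (gaussianWeight.pos β y).le
  have hfirst : Integrable (fun y => ⟪v, y⟫ * g y * g y * gaussianWeight β y) μ :=
    integrable_mul_mul_of_integrable_sq_mul hw (by fun_prop) hmom hg_int
  have hcross : Integrable (fun y => ⟪v, y⟫ * g y * ⟪v, ∇ g y⟫ * gaussianWeight β y) μ :=
    integrable_mul_mul_of_integrable_sq_mul hw (by fun_prop) hmom hgrad
  have hderiv (y : E) : gaussianWeight β y • fderiv ℝ (fun y => ⟪v, y⟫ * g y ^ 2) y v =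
      ‖v‖ ^ 2 * (g y ^ 2 * gaussianWeight β y) +
        2 * (⟪v, y⟫ * g y * ⟪v, ∇ g y⟫ * gaussianWeight β y) := by
    rw [fderiv_inner_mul_sq_apply (hg y), smul_eq_mul]
    ring
  have hsquare (y : E) : (⟪v, y⟫ * gaussianWeight β y) • (⟪v, y⟫ * g y ^ 2) =
      (⟪v, y⟫ * g y) ^ 2 * gaussianWeight β y := by
    rw [smul_eq_mul]
    ring
  have hstein := gaussianWeight.integral_inner_mul_smul (μ := μ) (β := β) (v := v)
    (f := fun y => ⟪v, y⟫ * g y ^ 2) ((innerSL ℝ v).differentiable.mul (hg.pow 2))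
    (hfirst.congr (ae_of_all _ fun y => by simp only [smul_eq_mul]; ring))
    (by simpa only [hsquare] using hmom)
    (by simpa only [hderiv] using! (hg_int.const_mul _).add (hcross.const_mul _))
  simpa only [hsquare, hderiv, integral_add (hg_int.const_mul _) (hcross.const_mul _),
    integral_const_mul, smul_eq_mul] using hstein

lemma integral_inner_mul_sq_mul_gaussianWeight_le (hβ : 0 < β) (hg : Differentiable ℝ g) (v : E)
    (hg_int : Integrable (fun y => g y ^ 2 * gaussianWeight β y) μ)
    (hmom : Integrable (fun y => (⟪v, y⟫ * g y) ^ 2 * gaussianWeight β y) μ)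
    (hgrad : Integrable (fun y => ⟪v, ∇ g y⟫ ^ 2 * gaussianWeight β y) μ) :
    ∫ y, (⟪v, y⟫ * g y) ^ 2 * gaussianWeight β y ∂μ ≤
      2 * ‖v‖ ^ 2 / β * ∫ y, g y ^ 2 * gaussianWeight β y ∂μ +
        4 / β ^ 2 * ∫ y, ⟪v, ∇ g y⟫ ^ 2 * gaussianWeight β y ∂μ := by
  have hgc : Continuous g := hg.continuous
  have hg' : AEStronglyMeasurable (∇ g) μ := (measurable_gradient g).aestronglyMeasurable
  have hparts := integral_inner_mul_sq_mul_gaussianWeight_eq hg v hg_int hmom hgrad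
  have hyoung := two_mul_integral_mul_le (half_pos hβ) (fun y => (gaussianWeight.pos β y).le)
    (by fun_prop) hmom hgrad
  set M := ∫ y, (⟪v, y⟫ * g y) ^ 2 * gaussianWeight β y ∂μ
  set A := ∫ y, g y ^ 2 * gaussianWeight β y ∂μ
  set B := ∫ y, ⟪v, ∇ g y⟫ ^ 2 * gaussianWeight β y ∂μ
  have habsorb : β / 2 * M ≤ ‖v‖ ^ 2 * A + (β / 2)⁻¹ * B := by linarith
  calc M = 2 / β * (β / 2 * M) := by field_simp
    _ ≤ 2 / β * (‖v‖ ^ 2 * A + (β / 2)⁻¹ * B) := by gcongr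
    _ = 2 * ‖v‖ ^ 2 / β * A + 4 / β ^ 2 * B := by field_simp; ring

lemma integral_norm_sq_mul_gaussianWeight_le_of_integrable (hβ : 0 < β) (hg : Differentiable ℝ g)
    (hg_int : Integrable (fun y => g y ^ 2 * gaussianWeight β y) μ)
    (hgrad : Integrable (fun y => ‖∇ g y‖ ^ 2 * gaussianWeight β y) μ)
    (hmom : Integrable (fun y => ‖y‖ ^ 2 * g y ^ 2 * gaussianWeight β y) μ) :
    ∫ y, ‖y‖ ^ 2 * g y ^ 2 * gaussianWeight β y ∂μ ≤
      2 * Module.finrank ℝ E / β * ∫ y, g y ^ 2 * gaussianWeight β y ∂μ +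
        4 / β ^ 2 * ∫ y, ‖∇ g y‖ ^ 2 * gaussianWeight β y ∂μ := by
  have hgc : Continuous g := hg.continuous
  let b := stdOrthonormalBasis ℝ E
  have hmom_coord i : Integrable (fun y => (⟪b i, y⟫ * g y) ^ 2 * gaussianWeight β y) μ := by
    simp only [mul_pow, mul_assoc] at hmom ⊢
    exact integrable_inner_sq_mul (b i) (by fun_prop) (by fun_prop) hmom
  have hgrad_coord i : Integrable (fun y => ⟪b i, ∇ g y⟫ ^ 2 * gaussianWeight β y) μ :=
    integrable_inner_sq_mul (b i) (measurable_gradient g).aestronglyMeasurable (by fun_prop) hgrad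
  have hmom_sum : ∫ y, ‖y‖ ^ 2 * g y ^ 2 * gaussianWeight β y ∂μ =
      ∑ i, ∫ y, (⟪b i, y⟫ * g y) ^ 2 * gaussianWeight β y ∂μ := by
    rw [← integral_finsetSum _ fun i _ => hmom_coord i]
    simp only [mul_pow, ← Finset.sum_mul, b.sum_sq_inner_right]
  have hgrad_sum : ∫ y, ‖∇ g y‖ ^ 2 * gaussianWeight β y ∂μ =
      ∑ i, ∫ y, ⟪b i, ∇ g y⟫ ^ 2 * gaussianWeight β y ∂μ := by
    rw [← integral_finsetSum _ fun i _ => hgrad_coord i]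
    simp only [← Finset.sum_mul, b.sum_sq_inner_right]
  rw [hmom_sum, hgrad_sum]
  refine (Finset.sum_le_sum fun i _ => integral_inner_mul_sq_mul_gaussianWeight_le hβ hg (b i)
    hg_int (hmom_coord i) (hgrad_coord i)).trans_eq ?_
  simp only [b.norm_eq_one, Finset.sum_add_distrib, Finset.sum_const, Finset.card_univ,
    Fintype.card_fin, nsmul_eq_mul, ← Finset.mul_sum]
  ring

lemma integral_norm_sq_mul_gaussianWeight_le_of_lt {γ : ℝ} (hβ : 0 < β) (hβγ : β < γ)
    (hg : Differentiable ℝ g) (hg_int : Integrable (fun y => g y ^ 2 * gaussianWeight β y) μ)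
    (hgrad : Integrable (fun y => ‖∇ g y‖ ^ 2 * gaussianWeight β y) μ) :
    ∫ y, ‖y‖ ^ 2 * g y ^ 2 * gaussianWeight γ y ∂μ ≤
      2 * Module.finrank ℝ E / β * ∫ y, g y ^ 2 * gaussianWeight β y ∂μ +
        4 / β ^ 2 * ∫ y, ‖∇ g y‖ ^ 2 * gaussianWeight β y ∂μ := by
  have hg_int' := gaussianWeight.integrable_mul_of_le hβγ.le hg_int
  have hgrad' := gaussianWeight.integrable_mul_of_le hβγ.le hgrad
  have hweight (y : E) : gaussianWeight γ y ≤ gaussianWeight β y :=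
    gaussianWeight.antitone y hβγ.le
  calc ∫ y, ‖y‖ ^ 2 * g y ^ 2 * gaussianWeight γ y ∂μ
      ≤ 2 * Module.finrank ℝ E / γ * ∫ y, g y ^ 2 * gaussianWeight γ y ∂μ +
        4 / γ ^ 2 * ∫ y, ‖∇ g y‖ ^ 2 * gaussianWeight γ y ∂μ :=
        integral_norm_sq_mul_gaussianWeight_le_of_integrable (hβ.trans hβγ) hg hg_int' hgrad'
          (gaussianWeight.integrable_norm_sq_mul_of_lt hβγ hg_int)
    _ ≤ 2 * Module.finrank ℝ E / β * ∫ y, g y ^ 2 * gaussianWeight β y ∂μ +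
        4 / β ^ 2 * ∫ y, ‖∇ g y‖ ^ 2 * gaussianWeight β y ∂μ := by
      have hmass_nonneg : 0 ≤ ∫ y, g y ^ 2 * gaussianWeight γ y ∂μ :=
        integral_nonneg fun y => mul_nonneg (sq_nonneg _) (gaussianWeight.pos γ y).le
      have hgrad_nonneg : 0 ≤ ∫ y, ‖∇ g y‖ ^ 2 * gaussianWeight γ y ∂μ :=
        integral_nonneg fun y => mul_nonneg (sq_nonneg _) (gaussianWeight.pos γ y).le
      gcongr <;> exact fun y => mul_le_mul_of_nonneg_left (hweight y) (sq_nonneg _)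

theorem stmt_1_general (hβ : 0 < β) (hg : Differentiable ℝ g)
    (hg_int : Integrable (fun y => g y ^ 2 * gaussianWeight β y) μ)
    (hgrad : Integrable (fun y => ‖∇ g y‖ ^ 2 * gaussianWeight β y) μ) :
    ∫⁻ y, ENNReal.ofReal (‖y‖ ^ 2 * g y ^ 2 * gaussianWeight β y) ∂μ ≤
      ENNReal.ofReal (2 * Module.finrank ℝ E / β * ∫ y, g y ^ 2 * gaussianWeight β y ∂μ) +
        ENNReal.ofReal (4 / β ^ 2 * ∫ y, ‖∇ g y‖ ^ 2 * gaussianWeight β y ∂μ) := by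
  have hgc : Continuous g := hg.continuous
  refine gaussianWeight.lintegral_mul_le_of_forall_gt (by fun_prop) (fun y => by positivity)
    fun γ hβγ => ?_
  have hmom := gaussianWeight.integrable_norm_sq_mul_of_lt hβγ hg_int
  rw [← ofReal_integral_eq_lintegral_ofReal hmom
    (ae_of_all _ fun y => mul_nonneg (by positivity) (gaussianWeight.pos γ y).le)]
  exact (ENNReal.ofReal_le_ofReal (integral_norm_sq_mul_gaussianWeight_le_of_lt hβ hβγ hg hg_int
    hgrad)).trans ENNReal.ofReal_add_le

end InnerProduct

theorem stmt_1 (d : ℕ) (hd : 1 ≤ d) (β : ℝ) (hβ : 1 ≤ β)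
    (g : EuclideanSpace ℝ (Fin d) → ℝ) (hg : ContDiff ℝ 1 g)
    (h1 : Integrable (fun y : EuclideanSpace ℝ (Fin d) =>
      g y ^ 2 * Real.exp (-β * ‖y‖ ^ 2 / 2)))
    (h2 : Integrable (fun y : EuclideanSpace ℝ (Fin d) =>
      ‖gradient g y‖ ^ 2 * Real.exp (-β * ‖y‖ ^ 2 / 2))) :
    ∫⁻ y : EuclideanSpace ℝ (Fin d),
        ENNReal.ofReal (‖y‖ ^ 2 * g y ^ 2 * Real.exp (-β * ‖y‖ ^ 2 / 2))
      ≤ ENNReal.ofReal ((2 * d / β) *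
          ∫ y : EuclideanSpace ℝ (Fin d), g y ^ 2 * Real.exp (-β * ‖y‖ ^ 2 / 2))
        + ENNReal.ofReal ((4 / β ^ 2) *
          ∫ y : EuclideanSpace ℝ (Fin d), ‖gradient g y‖ ^ 2 * Real.exp (-β * ‖y‖ ^ 2 / 2)) := by
  simpa only [gaussianWeight, finrank_euclideanSpace_fin] using
    stmt_1_general (zero_lt_one.trans_le hβ) (hg.differentiable one_ne_zero) h1 h2
end

section
/- Let d ≥ 1, K > 0, L > √(2K) + 2 and G ≥ 0. There exist real numbers m, n with √(2K) < n < m < L, a constant σ_* > 0, and C^∞ functions W : ℝ^d → [0,∞) and σ : ℝ^d → [0,∞), both 2L-periodic in each coordinate, such that: (i) W(y) = |y|²/2 for all y ∈ [−m, m]^d; (ii) every local minimum point of W belongs to 2Lℤ^d (so that, viewed on the torus (ℝ/2Lℤ)^d, W has a unique local minimum, which is global, attained at 0); (iii) σ(y) = σ_* for all y ∈ [−L, L]^d \ [−m, m]^d; (iv) σ(y) = 0 for all y ∈ [−n, n]^d; (v) G · sup_y |∇σ(y)| ≤ 1/2 and |∇σ(y)|² ≤ σ(y) for all y ∈ ℝ^d.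 -/
open Real Set

/-!
`W y = ∑ i, φ (y i)`, where `φ' = f` is a smooth odd `2L`-periodic function with `f t = t` on
`[-m, m]` and `f > 0` on `(0, L)`. A primitive of an odd periodic function is even and periodic, and
the sign of `f` makes `φ` strictly increasing on `[0, L]`, so its local minima are the points of
`2Lℤ`; a local minimum of a sum of functions of separate variables is one in each variable.

`σ = c g ^ 2`, where `g = 1 - ∏ i, χ (y i)` for a smooth periodic cutoff `χ` equal to `1` on
`[-n, n]` and to `0` on `[-L, L]` outside `[-m, m]`. By periodicity `|∇g|` is bounded, and
`|∇(c g ^ 2)|² = 4 c |∇g|² (c g ^ 2)`, so both gradient conditions hold once `c` is small.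
-/

section EvenPeriodic

lemma apply_abs_of_even {α β : Type*} [AddGroup α] [LinearOrder α] {f : α → β}
    (hf : Function.Even f) (t : α) : f |t| = f t := by
  rcases abs_choice t with h | h <;> rw [h]
  exact hf t

lemma apply_add_mul_int_of_periodic {R β : Type*} [CommRing R] {f : R → β} {c : R}
    (hf : Function.Periodic f c) (t : R) (k : ℤ) : f (t + c * k) = f t := by
  rw [mul_comm]
  exact hf.int_mul k t

lemma exists_int_abs_sub_mul_le {L : ℝ} (hL : 0 < L) (t : ℝ) : ∃ k : ℤ, |t - 2 * L * k| ≤ L := by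
  obtain ⟨k, ⟨hk₁, hk₂⟩, -⟩ := existsUnique_sub_zsmul_mem_Ioc (show 0 < 2 * L by positivity) t (-L)
  rw [zsmul_eq_mul, mul_comm] at hk₁ hk₂
  exact ⟨k, abs_le.2 ⟨hk₁.le, by linarith⟩⟩

lemma not_isLocalMin_of_strictMonoOn_Icc {α β : Type*} [LinearOrder α] [TopologicalSpace α]
    [OrderTopology α] [DenselyOrdered α] [Preorder β] {f : α → β} {a b t : α}
    (hf : StrictMonoOn f (Icc a b)) (ht : t ∈ Ioc a b) : ¬ IsLocalMin f t := by
  intro hmin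
  have : (nhdsWithin t (Iio t)).NeBot := nhdsLT_neBot_of_exists_lt ⟨a, ht.1⟩
  obtain ⟨s, hs, has, hst⟩ :=
    ((hmin.filter_mono nhdsWithin_le_nhds).and (Ioo_mem_nhdsLT ht.1)).exists
  exact (hf ⟨has.le, hst.le.trans ht.2⟩ (Ioc_subset_Icc_self ht) hst).not_ge hs

variable {β : Type*} [Preorder β] {f : ℝ → β} {L : ℝ}

lemma apply_zero_le_of_even_of_periodic (hL : 0 < L) (heven : Function.Even f)
    (hper : Function.Periodic f (2 * L)) (hmono : MonotoneOn f (Icc 0 L)) (t : ℝ) :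
    f 0 ≤ f t := by
  obtain ⟨k, hk⟩ := exists_int_abs_sub_mul_le hL t
  calc f 0 ≤ f |t - 2 * L * k| := hmono ⟨le_rfl, hL.le⟩ ⟨abs_nonneg _, hk⟩ (abs_nonneg _)
    _ = f (t - 2 * L * k) := apply_abs_of_even heven _
    _ = f t := by rw [← apply_add_mul_int_of_periodic hper _ k, sub_add_cancel]

lemma exists_eq_mul_int_of_isLocalMin (hL : 0 < L) (heven : Function.Even f)
    (hper : Function.Periodic f (2 * L)) (hmono : StrictMonoOn f (Icc 0 L)) {t : ℝ}
    (hmin : IsLocalMin f t) : ∃ k : ℤ, t = 2 * L * k := by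
  obtain ⟨k, hk⟩ := exists_int_abs_sub_mul_le hL t
  set s := t - 2 * L * k with hs
  have hmin_s : IsLocalMin f s := by
    have h : IsLocalMin (f ∘ (· + 2 * L * k)) s :=
      IsLocalMin.comp_continuous (by rwa [hs, sub_add_cancel]) (by fun_prop)
    rwa [show f ∘ (· + 2 * L * k) = f from
      funext fun u => apply_add_mul_int_of_periodic hper u k] at h
  have hmin_abs : IsLocalMin f |s| := by
    rcases abs_choice s with h | h <;> rw [h]
    · exact hmin_s
    · have h' : IsLocalMin (f ∘ Neg.neg) (-s) :=
        IsLocalMin.comp_continuous (by rwa [neg_neg]) continuous_neg.continuousAt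
      rwa [show f ∘ Neg.neg = f from funext heven] at h'
  refine ⟨k, by_contra fun hne => ?_⟩
  exact not_isLocalMin_of_strictMonoOn_Icc hmono ⟨abs_pos.2 (sub_ne_zero.2 hne), hk⟩ hmin_abs

end EvenPeriodic

section Primitive

variable {E : Type*} [NormedAddCommGroup E] [NormedSpace ℝ E] {f : ℝ → E}

lemma even_integral_of_odd (hf : Function.Odd f) : Function.Even fun t => ∫ s in (0)..t, f s := by
  intro t
  calc ∫ s in (0)..(-t), f s = -∫ s in (-t)..(-0), f s := by
        rw [neg_zero, intervalIntegral.integral_symm]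
    _ = ∫ s in (0)..t, f s := by
        rw [← intervalIntegral.integral_comp_neg, ← intervalIntegral.integral_neg]
        simp only [hf _, neg_neg]

lemma periodic_integral_of_odd {T : ℝ} (hf : Continuous f) (hodd : Function.Odd f)
    (hper : Function.Periodic f T) : Function.Periodic (fun t => ∫ s in (0)..t, f s) T := by
  have hint : ∀ a b, IntervalIntegrable f MeasureTheory.volume a b := hf.intervalIntegrable
  have hzero : ∫ s in (0)..(0 + T), f s = 0 := by
    calc ∫ s in (0)..(0 + T), f s = ∫ s in (-(T / 2))..(-(T / 2) + T), f s :=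
          hper.intervalIntegral_add_eq _ _
      _ = (∫ s in (0)..(T / 2), f s) - ∫ s in (0)..(-(T / 2)), f s := by
          rw [intervalIntegral.integral_interval_sub_left (hint _ _) (hint _ _)]
          ring_nf
      _ = 0 := sub_eq_zero.2 (even_integral_of_odd hodd _).symm
  intro t
  simp only [hper.intervalIntegral_add_eq_add 0 t hint, hzero, add_zero]

lemma contDiff_integral [CompleteSpace E] (hf : ContDiff ℝ (⊤ : ℕ∞) f) (a : ℝ) :
    ContDiff ℝ (⊤ : ℕ∞) fun t => ∫ s in a..t, f s := by
  have hderiv : deriv (fun t => ∫ s in a..t, f s) = f :=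
    funext fun t => hf.continuous.deriv_integral f a t
  refine contDiff_infty_iff_deriv.2 ⟨fun t => ?_, hderiv.symm ▸ hf⟩
  exact (hf.continuous.integral_hasStrictDerivAt a t).hasDerivAt.differentiableAt

lemma strictMonoOn_integral {f : ℝ → ℝ} {a b : ℝ} (hf : Continuous f)
    (hpos : ∀ t ∈ Ioo a b, 0 < f t) : StrictMonoOn (fun t => ∫ s in a..t, f s) (Icc a b) := by
  refine strictMonoOn_of_deriv_pos (convex_Icc a b)
    (intervalIntegral.continuous_primitive hf.intervalIntegrable a).continuousOn fun t ht => ?_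
  rw [hf.deriv_integral]
  exact hpos t (by rwa [interior_Icc] at ht)

end Primitive

section PeriodicCutoff

variable {L a b t : ℝ}

/-- A smooth even `2L`-periodic cutoff, equal to `1` on `[-a, a]` and to `0` on `[-L, L]` outside
`[-b, b]` when `0 ≤ a < b ≤ L`. -/
noncomputable def periodicCutoff (L a b t : ℝ) : ℝ :=
  smoothTransition ((cos (π / L * t) - cos (π / L * b)) / (cos (π / L * a) - cos (π / L * b)))

lemma cos_pi_div_mul_add_two_mul (hL : L ≠ 0) (t : ℝ) :
    cos (π / L * (t + 2 * L)) = cos (π / L * t) := by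
  rw [show π / L * (t + 2 * L) = π / L * t + 2 * π by field_simp, cos_add_two_pi]

lemma strictAntiOn_cos_pi_div_mul (hL : 0 < L) :
    StrictAntiOn (fun t => cos (π / L * t)) (Icc 0 L) := by
  have hp : 0 < π / L := by positivity
  refine strictAntiOn_cos.comp_strictMonoOn
    ((strictMono_mul_left_of_pos hp).strictMonoOn _) fun t ht => ⟨mul_nonneg hp.le ht.1, ?_⟩
  calc π / L * t ≤ π / L * L := by gcongr; exact ht.2
    _ = π := by field_simp

lemma contDiff_periodicCutoff : ContDiff ℝ (⊤ : ℕ∞) (periodicCutoff L a b) :=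
  smoothTransition.contDiff.comp (by fun_prop)

lemma periodicCutoff_mem_Icc : periodicCutoff L a b t ∈ Icc 0 1 :=
  ⟨smoothTransition.nonneg _, smoothTransition.le_one _⟩

lemma even_periodicCutoff : Function.Even (periodicCutoff L a b) := fun t => by
  simp only [periodicCutoff, mul_neg, cos_neg]

lemma periodic_periodicCutoff (hL : L ≠ 0) :
    Function.Periodic (periodicCutoff L a b) (2 * L) := fun t => by
  simp only [periodicCutoff, cos_pi_div_mul_add_two_mul hL]

lemma cos_pi_div_mul_sub_pos (ha : 0 ≤ a) (hab : a < b) (hbL : b ≤ L) :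
    0 < cos (π / L * a) - cos (π / L * b) :=
  sub_pos.2 <| strictAntiOn_cos_pi_div_mul ((ha.trans_lt hab).trans_le hbL)
    ⟨ha, (hab.trans_le hbL).le⟩ ⟨(ha.trans_lt hab).le, hbL⟩ hab

lemma periodicCutoff_eq_one (hab : a < b) (hbL : b ≤ L) (ht : |t| ≤ a) :
    periodicCutoff L a b t = 1 := by
  have ha : 0 ≤ a := (abs_nonneg t).trans ht
  have haL : a ≤ L := (hab.trans_le hbL).le
  rw [← apply_abs_of_even even_periodicCutoff]
  refine smoothTransition.one_of_one_le ((one_le_div (cos_pi_div_mul_sub_pos ha hab hbL)).2 ?_)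
  exact sub_le_sub_right ((strictAntiOn_cos_pi_div_mul ((ha.trans_lt hab).trans_le hbL)).antitoneOn
    ⟨abs_nonneg t, ht.trans haL⟩ ⟨ha, haL⟩ ht) _

lemma periodicCutoff_eq_zero_of_cos_le (ha : 0 ≤ a) (hab : a < b) (hbL : b ≤ L)
    (ht : cos (π / L * t) ≤ cos (π / L * b)) : periodicCutoff L a b t = 0 :=
  smoothTransition.zero_of_nonpos <|
    div_nonpos_of_nonpos_of_nonneg (sub_nonpos.2 ht) (cos_pi_div_mul_sub_pos ha hab hbL).le

lemma periodicCutoff_eq_zero (ha : 0 ≤ a) (hab : a < b) (hbt : b ≤ |t|) (ht : |t| ≤ L) :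
    periodicCutoff L a b t = 0 := by
  have hb : 0 < b := ha.trans_lt hab
  rw [← apply_abs_of_even even_periodicCutoff]
  exact periodicCutoff_eq_zero_of_cos_le ha hab (hbt.trans ht) <|
    (strictAntiOn_cos_pi_div_mul (hb.trans_le (hbt.trans ht))).antitoneOn
      ⟨hb.le, hbt.trans ht⟩ ⟨abs_nonneg t, ht⟩ hbt

end PeriodicCutoff

section PeriodicPotential

variable {L a b t : ℝ}

/-- The sawtooth wave of period `2L` and slope `1`, equal to `t` on `(-L, L)` and to `0` at its
jumps, where `tan` takes the junk value `0`. -/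
noncomputable def sawtooth (L t : ℝ) : ℝ :=
  2 * L / π * arctan (tan (π / (2 * L) * t))

lemma odd_sawtooth : Function.Odd (sawtooth L) := fun t => by
  simp only [sawtooth, mul_neg, tan_neg, arctan_neg]

lemma periodic_sawtooth (hL : L ≠ 0) : Function.Periodic (sawtooth L) (2 * L) := fun t => by
  have h : π / (2 * L) * (t + 2 * L) = π / (2 * L) * t + π := by field_simp
  simp only [sawtooth, h, tan_periodic _]

lemma sawtooth_eq_self (ht : |t| < L) : sawtooth L t = t := by
  have hL : 0 < L := (abs_nonneg t).trans_lt ht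
  have hangle : |π / (2 * L) * t| < π / 2 := by
    rw [abs_mul, abs_of_pos (by positivity)]
    calc π / (2 * L) * |t| < π / (2 * L) * L := by gcongr
      _ = π / 2 := by field_simp
  rw [sawtooth, arctan_tan (neg_lt_of_abs_lt hangle) (lt_of_abs_lt hangle)]
  field_simp

lemma contDiffAt_sawtooth {n : WithTop ℕ∞} (hL : L ≠ 0) (ht : cos (π / L * t) ≠ -1) :
    ContDiffAt ℝ n (sawtooth L) t := by
  have hcos : cos (π / (2 * L) * t) ≠ 0 := by
    intro h
    apply ht
    rw [show π / L * t = 2 * (π / (2 * L) * t) by field_simp, cos_two_mul, h]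
    norm_num
  have htan : ContDiffAt ℝ n (fun u => tan (π / (2 * L) * u)) t :=
    (contDiffAt_tan.2 hcos).comp t (by fun_prop)
  exact contDiffAt_const.mul (contDiff_arctan.contDiffAt.comp t htan)

/-- A smooth odd `2L`-periodic function, equal to `t` on `[-a, a]` and positive on `(0, L)`: the
derivative of `periodicPotential`. The cutoff removes the jumps of the sawtooth wave. -/
noncomputable def periodicForce (L a b t : ℝ) : ℝ :=
  periodicCutoff L a b t * sawtooth L t + (1 - periodicCutoff L a b t) * sin (π / L * t)

lemma odd_periodicForce : Function.Odd (periodicForce L a b) := fun t => by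
  simp only [periodicForce, even_periodicCutoff t, odd_sawtooth t, mul_neg, sin_neg]
  ring

lemma periodic_periodicForce (hL : L ≠ 0) : Function.Periodic (periodicForce L a b) (2 * L) := by
  intro t
  have h : π / L * (t + 2 * L) = π / L * t + 2 * π := by field_simp
  simp only [periodicForce, periodic_periodicCutoff hL t, periodic_sawtooth hL t, h, sin_add_two_pi]

lemma contDiff_periodicForce (ha : 0 ≤ a) (hab : a < b) (hbL : b < L) :
    ContDiff ℝ (⊤ : ℕ∞) (periodicForce L a b) := by
  have hb : 0 < b := ha.trans_lt hab
  have hL : 0 < L := hb.trans hbL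
  have hcut : ContDiff ℝ (⊤ : ℕ∞) (periodicCutoff L a b) := contDiff_periodicCutoff
  refine ContDiff.add (contDiff_iff_contDiffAt.2 fun t => ?_)
    ((contDiff_const.sub hcut).mul (by fun_prop))
  by_cases ht : cos (π / L * t) = -1
  · have hlt : cos (π / L * t) < cos (π / L * b) := by
      have h := strictAntiOn_cos_pi_div_mul hL ⟨hb.le, hbL.le⟩ ⟨hL.le, le_rfl⟩ hbL
      simpa only [ht, div_mul_cancel₀ _ hL.ne', cos_pi] using h
    have hnear : ∀ᶠ u in nhds t, cos (π / L * u) < cos (π / L * b) :=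
      ContinuousAt.eventually_lt (by fun_prop) continuousAt_const hlt
    refine (contDiffAt_const (c := (0 : ℝ))).congr_of_eventuallyEq ?_
    filter_upwards [hnear] with u hu
    rw [periodicCutoff_eq_zero_of_cos_le ha hab hbL.le hu.le, zero_mul]
  · exact hcut.contDiffAt.mul (contDiffAt_sawtooth hL.ne' ht)

lemma periodicForce_eq_self (hab : a < b) (hbL : b ≤ L) (ht : |t| ≤ a) :
    periodicForce L a b t = t := by
  rw [periodicForce, periodicCutoff_eq_one hab hbL ht,
    sawtooth_eq_self (ht.trans_lt (hab.trans_le hbL))]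
  ring

lemma periodicForce_pos (ht : t ∈ Ioo 0 L) : 0 < periodicForce L a b t := by
  have hL : 0 < L := ht.1.trans ht.2
  have hsin : 0 < sin (π / L * t) := by
    refine sin_pos_of_pos_of_lt_pi (mul_pos (by positivity) ht.1) ?_
    calc π / L * t < π / L * L := by gcongr; exact ht.2
      _ = π := by field_simp
  have hcut : periodicCutoff L a b t ∈ Icc 0 1 := periodicCutoff_mem_Icc
  rw [periodicForce, sawtooth_eq_self (abs_lt.2 ⟨by linarith [ht.1], ht.2⟩)]
  exact convex_Ioi (0 : ℝ) ht.1 hsin hcut.1 (sub_nonneg.2 hcut.2) (add_sub_cancel _ _)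

/-- A smooth even `2L`-periodic potential, equal to `t ^ 2 / 2` on `[-a, a]`, whose only local
minima are the points of `2Lℤ`. -/
noncomputable def periodicPotential (L a b t : ℝ) : ℝ :=
  ∫ s in (0)..t, periodicForce L a b s

lemma periodicPotential_eq_sq (hab : a < b) (hbL : b ≤ L) (ht : |t| ≤ a) :
    periodicPotential L a b t = t ^ 2 / 2 := by
  have hforce : ∀ s ∈ uIcc 0 t, periodicForce L a b s = s := fun s hs =>
    periodicForce_eq_self hab hbL (by simpa using (abs_sub_left_of_mem_uIcc hs).trans (by simpa))
  rw [periodicPotential, intervalIntegral.integral_congr hforce, integral_id]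
  ring

lemma contDiff_periodicPotential (ha : 0 ≤ a) (hab : a < b) (hbL : b < L) :
    ContDiff ℝ (⊤ : ℕ∞) (periodicPotential L a b) :=
  contDiff_integral (contDiff_periodicForce ha hab hbL) 0

lemma even_periodicPotential : Function.Even (periodicPotential L a b) :=
  even_integral_of_odd odd_periodicForce

lemma periodic_periodicPotential (ha : 0 ≤ a) (hab : a < b) (hbL : b < L) :
    Function.Periodic (periodicPotential L a b) (2 * L) :=
  periodic_integral_of_odd (contDiff_periodicForce ha hab hbL).continuous odd_periodicForce
    (periodic_periodicForce ((ha.trans_lt hab).trans hbL).ne')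

lemma strictMonoOn_periodicPotential (ha : 0 ≤ a) (hab : a < b) (hbL : b < L) :
    StrictMonoOn (periodicPotential L a b) (Icc 0 L) :=
  strictMonoOn_integral (contDiff_periodicForce ha hab hbL).continuous fun _ => periodicForce_pos

lemma periodicPotential_nonneg (ha : 0 ≤ a) (hab : a < b) (hbL : b < L) :
    0 ≤ periodicPotential L a b t := by
  have h := apply_zero_le_of_even_of_periodic ((ha.trans_lt hab).trans hbL) even_periodicPotential
    (periodic_periodicPotential ha hab hbL) (strictMonoOn_periodicPotential ha hab hbL).monotoneOn t
  rwa [periodicPotential, intervalIntegral.integral_same] at h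

lemma exists_eq_mul_int_of_isLocalMin_periodicPotential (ha : 0 ≤ a) (hab : a < b) (hbL : b < L)
    (ht : IsLocalMin (periodicPotential L a b) t) : ∃ k : ℤ, t = 2 * L * k :=
  exists_eq_mul_int_of_isLocalMin ((ha.trans_lt hab).trans hbL) even_periodicPotential
    (periodic_periodicPotential ha hab hbL) (strictMonoOn_periodicPotential ha hab hbL) ht

end PeriodicPotential

lemma isLocalMin_of_sum_apply {ι β : Type*} {X : ι → Type*} [Fintype ι]
    [∀ i, TopologicalSpace (X i)] [AddCommMonoid β] [Preorder β] [AddLeftReflectLE β]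
    {f : ∀ i, X i → β} {y : ∀ i, X i} (h : IsLocalMin (fun z : ∀ i, X i => ∑ i, f i (z i)) y)
    (i : ι) : IsLocalMin (f i) (y i) := by
  classical
  have hline : IsLocalMin ((fun z : ∀ i, X i => ∑ i, f i (z i)) ∘ Function.update y i) (y i) :=
    IsLocalMin.comp_continuous (by rwa [Function.update_eq_self]) (by fun_prop)
  filter_upwards [hline] with t ht
  have hrest : ∑ j ∈ Finset.univ.erase i, f j (Function.update y i t j) =
      ∑ j ∈ Finset.univ.erase i, f j (y j) :=
    Finset.sum_congr rfl fun j hj => by rw [Function.update_of_ne (Finset.ne_of_mem_erase hj)]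
  simp only [Function.comp_apply, Function.update_eq_self,
    ← Finset.sum_erase_add _ _ (Finset.mem_univ i), hrest, Function.update_self] at ht
  exact le_of_add_le_add_left ht

section GradNormSq

variable {ι : Type*} [Fintype ι] [DecidableEq ι]

/-- The square `|∇f|²` of the Euclidean norm of the gradient, written in coordinates because
`ι → ℝ` carries the sup norm. -/
noncomputable def gradNormSq (f : (ι → ℝ) → ℝ) (y : ι → ℝ) : ℝ :=
  ∑ i, (fderiv ℝ f y (Pi.single i 1)) ^ 2

lemma gradNormSq_nonneg (f : (ι → ℝ) → ℝ) (y : ι → ℝ) : 0 ≤ gradNormSq f y :=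
  Finset.sum_nonneg fun _ _ => sq_nonneg _

lemma gradNormSq_const_sub (c : ℝ) (f : (ι → ℝ) → ℝ) (y : ι → ℝ) :
    gradNormSq (fun z => c - f z) y = gradNormSq f y := by
  simp only [gradNormSq, fderiv_const_sub, neg_apply, neg_sq]

lemma gradNormSq_const_mul_sq {g : (ι → ℝ) → ℝ} {y : ι → ℝ} (hg : DifferentiableAt ℝ g y) (c : ℝ) :
    gradNormSq (fun z => c * g z ^ 2) y = 4 * c ^ 2 * g y ^ 2 * gradNormSq g y := by
  have hfderiv := ((hg.hasFDerivAt.pow 2).const_mul c).fderiv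
  simp only [gradNormSq, hfderiv, Finset.mul_sum]
  refine Finset.sum_congr rfl fun i _ => ?_
  simp only [smul_apply, smul_eq_mul, nsmul_eq_mul]
  push_cast
  ring

lemma exists_gradNormSq_const_mul_sq_le {g : (ι → ℝ) → ℝ} {M : ℝ} (hg : Differentiable ℝ g)
    (hg1 : ∀ y, |g y| ≤ 1) (hM : ∀ y, gradNormSq g y ≤ M) (G : ℝ) :
    ∃ c > 0, ∀ y, G * √(gradNormSq (fun z => c * g z ^ 2) y) ≤ 1 / 2 ∧
      gradNormSq (fun z => c * g z ^ 2) y ≤ c * g y ^ 2 := by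
  have hM0 : 0 ≤ M := (gradNormSq_nonneg g 0).trans (hM 0)
  set c := 1 / (4 * (M + G ^ 2 + 1)) with hc
  have hc0 : 0 < c := by positivity
  have hcM : 4 * c * M ≤ 1 := by
    rw [hc]; field_simp; nlinarith [sq_nonneg G]
  have hcG : G ^ 2 * c ≤ (1 / 2) ^ 2 := by
    rw [hc]; field_simp; nlinarith
  refine ⟨c, hc0, fun y => ?_⟩
  have hgrad : gradNormSq (fun z => c * g z ^ 2) y ≤ c * g y ^ 2 :=
    calc gradNormSq (fun z => c * g z ^ 2) y = 4 * c * gradNormSq g y * (c * g y ^ 2) := by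
          rw [gradNormSq_const_mul_sq (hg y)]; ring
      _ ≤ 4 * c * M * (c * g y ^ 2) := by gcongr; exact hM y
      _ ≤ c * g y ^ 2 := mul_le_of_le_one_left (by positivity) hcM
  refine ⟨le_of_sq_le_sq ?_ (by norm_num), hgrad⟩
  calc (G * √(gradNormSq (fun z => c * g z ^ 2) y)) ^ 2
      = G ^ 2 * gradNormSq (fun z => c * g z ^ 2) y := by
        rw [mul_pow, sq_sqrt (gradNormSq_nonneg _ y)]
    _ ≤ G ^ 2 * (c * g y ^ 2) := by gcongr
    _ ≤ G ^ 2 * c := by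
        gcongr; exact mul_le_of_le_one_right hc0.le ((sq_le_one_iff_abs_le_one _).2 (hg1 y))
    _ ≤ (1 / 2) ^ 2 := hcG

lemma fderiv_prod_apply_single {𝕜 : Type*} [NontriviallyNormedField 𝕜] {f : ι → 𝕜 → 𝕜} {y : ι → 𝕜}
    (hf : ∀ j, DifferentiableAt 𝕜 (f j) (y j)) (i : ι) :
    fderiv 𝕜 (fun z : ι → 𝕜 => ∏ j, f j (z j)) y (Pi.single i 1) =
      (∏ j ∈ Finset.univ.erase i, f j (y j)) * deriv (f i) (y i) := by
  have hfactor : ∀ j, HasFDerivAt (fun z : ι → 𝕜 => f j (z j))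
      (deriv (f j) (y j) • ContinuousLinearMap.proj (R := 𝕜) (φ := fun _ : ι => 𝕜) j) y :=
    fun j => (hf j).hasDerivAt.comp_hasFDerivAt y (hasFDerivAt_apply j y)
  rw [(HasFDerivAt.finsetProd fun j _ => hfactor j).fderiv]
  simp [Pi.single_apply]

lemma gradNormSq_prod_le {f : ι → ℝ → ℝ} {C : ℝ} {y : ι → ℝ}
    (hf : ∀ j, DifferentiableAt ℝ (f j) (y j)) (hf1 : ∀ j, |f j (y j)| ≤ 1)
    (hC : ∀ j, |deriv (f j) (y j)| ≤ C) :
    gradNormSq (fun z : ι → ℝ => ∏ j, f j (z j)) y ≤ Fintype.card ι * C ^ 2 := by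
  have hpartial : ∀ i, (fderiv ℝ (fun z : ι → ℝ => ∏ j, f j (z j)) y (Pi.single i 1)) ^ 2 ≤
      C ^ 2 := fun i => by
    rw [fderiv_prod_apply_single hf, sq_le_sq, abs_mul, Finset.abs_prod]
    calc (∏ j ∈ Finset.univ.erase i, |f j (y j)|) * |deriv (f i) (y i)|
        ≤ 1 * |deriv (f i) (y i)| := by
          gcongr; exact Finset.prod_le_one (fun j _ => abs_nonneg _) fun j _ => hf1 j
      _ ≤ |C| := by rw [one_mul]; exact (hC i).trans (le_abs_self C)
  simpa [gradNormSq] using Finset.sum_le_card_nsmul Finset.univ _ _ fun i _ => hpartial i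

end GradNormSq

lemma exists_norm_deriv_le_of_periodic {F : Type*} [NormedAddCommGroup F] [NormedSpace ℝ F]
    {f : ℝ → F} {T : ℝ} (hf : ContDiff ℝ 1 f) (hper : Function.Periodic f T) (hT : T ≠ 0) :
    ∃ C, ∀ t, ‖deriv f t‖ ≤ C := by
  have hper' : Function.Periodic (deriv f) T := fun t => by
    rw [← deriv_comp_add_const, funext hper]
  obtain ⟨C, hC⟩ :=
    (hper'.isBounded_of_continuous hT (hf.continuous_deriv le_rfl)).exists_norm_le
  exact ⟨C, fun t => hC _ (mem_range_self t)⟩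

section CubeBarrier

variable {ι : Type*} [Fintype ι] {L a b : ℝ} {y : ι → ℝ}

/-- A smooth `2L`-periodic function with values in `[0, 1]`, equal to `0` on the cube `[-a, a]^ι`
and to `1` on `[-L, L]^ι` outside `[-b, b]^ι`. -/
noncomputable def cubeBarrier (L a b : ℝ) (y : ι → ℝ) : ℝ :=
  1 - ∏ i, periodicCutoff L a b (y i)

lemma contDiff_cubeBarrier : ContDiff ℝ (⊤ : ℕ∞) (cubeBarrier L a b : (ι → ℝ) → ℝ) :=
  contDiff_const.sub (contDiff_prod fun i _ => contDiff_periodicCutoff.comp (contDiff_apply ℝ ℝ i))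

lemma abs_cubeBarrier_le_one : |cubeBarrier L a b y| ≤ 1 := by
  have h0 : 0 ≤ ∏ i, periodicCutoff L a b (y i) :=
    Finset.prod_nonneg fun i _ => periodicCutoff_mem_Icc.1
  have h1 : ∏ i, periodicCutoff L a b (y i) ≤ 1 :=
    Finset.prod_le_one (fun i _ => periodicCutoff_mem_Icc.1) fun i _ => periodicCutoff_mem_Icc.2
  rw [cubeBarrier, abs_of_nonneg (sub_nonneg.2 h1)]
  exact sub_le_self 1 h0

lemma cubeBarrier_add_mul_int (hL : L ≠ 0) (y : ι → ℝ) (k : ι → ℤ) :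
    cubeBarrier L a b (y + fun i => 2 * L * k i) = cubeBarrier L a b y := by
  simp only [cubeBarrier, Pi.add_apply, apply_add_mul_int_of_periodic (periodic_periodicCutoff hL)]

lemma cubeBarrier_eq_zero (hab : a < b) (hbL : b ≤ L) (hy : ∀ i, y i ∈ Icc (-a) a) :
    cubeBarrier L a b y = 0 :=
  sub_eq_zero.2 <| Eq.symm <|
    Finset.prod_eq_one fun i _ => periodicCutoff_eq_one hab hbL (abs_le.2 (hy i))

lemma cubeBarrier_eq_one (ha : 0 ≤ a) (hab : a < b) (hyL : ∀ i, y i ∈ Icc (-L) L)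
    (hyb : ¬ ∀ i, y i ∈ Icc (-b) b) : cubeBarrier L a b y = 1 := by
  obtain ⟨i, hi⟩ := not_forall.1 hyb
  have hbi : b ≤ |y i| := (not_le.1 fun h => hi (abs_le.1 h)).le
  rw [cubeBarrier, Finset.prod_eq_zero (Finset.mem_univ i)
    (periodicCutoff_eq_zero ha hab hbi (abs_le.2 (hyL i))), sub_zero]

lemma exists_gradNormSq_cubeBarrier_le [DecidableEq ι] (hL : L ≠ 0) :
    ∃ M, ∀ y : ι → ℝ, gradNormSq (cubeBarrier L a b) y ≤ M := by
  have hcut : ContDiff ℝ (⊤ : ℕ∞) (periodicCutoff L a b) := contDiff_periodicCutoff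
  obtain ⟨C, hC⟩ := exists_norm_deriv_le_of_periodic (hcut.of_le (mod_cast le_top))
    (periodic_periodicCutoff hL) (mul_ne_zero two_ne_zero hL)
  refine ⟨Fintype.card ι * C ^ 2, fun y => ?_⟩
  calc gradNormSq (cubeBarrier L a b) y
      = gradNormSq (fun z : ι → ℝ => ∏ i, periodicCutoff L a b (z i)) y :=
        gradNormSq_const_sub 1 _ y
    _ ≤ Fintype.card ι * C ^ 2 := gradNormSq_prod_le
        (fun j => hcut.differentiable (by simp) _)
        (fun j => by rw [abs_of_nonneg periodicCutoff_mem_Icc.1]; exact periodicCutoff_mem_Icc.2)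
        fun j => hC _

end CubeBarrier

theorem stmt_10_general {ι : Type*} [Fintype ι] [DecidableEq ι] {n m L : ℝ} (hn : 0 ≤ n)
    (hnm : n < m) (hmL : m < L) (G : ℝ) :
    ∃ σstar : ℝ, ∃ W σ : (ι → ℝ) → ℝ, 0 < σstar ∧
      ContDiff ℝ (⊤ : ℕ∞) W ∧ ContDiff ℝ (⊤ : ℕ∞) σ ∧
      (∀ y, 0 ≤ W y) ∧ (∀ y, 0 ≤ σ y) ∧
      (∀ (y : ι → ℝ) (k : ι → ℤ), W (y + fun i => 2 * L * (k i)) = W y) ∧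
      (∀ (y : ι → ℝ) (k : ι → ℤ), σ (y + fun i => 2 * L * (k i)) = σ y) ∧
      (∀ y : ι → ℝ, (∀ i, y i ∈ Icc (-m) m) → W y = (∑ i, (y i) ^ 2) / 2) ∧
      (∀ y : ι → ℝ, IsLocalMin W y → ∃ k : ι → ℤ, ∀ i, y i = 2 * L * (k i)) ∧
      (∀ y : ι → ℝ, (∀ i, y i ∈ Icc (-L) L) → ¬ (∀ i, y i ∈ Icc (-m) m) → σ y = σstar) ∧
      (∀ y : ι → ℝ, (∀ i, y i ∈ Icc (-n) n) → σ y = 0) ∧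
      (∀ y : ι → ℝ, G * √(∑ i, (fderiv ℝ σ y (Pi.single i 1)) ^ 2) ≤ 1 / 2 ∧
        (∑ i, (fderiv ℝ σ y (Pi.single i 1)) ^ 2) ≤ σ y) := by
  have hm : 0 ≤ m := hn.trans hnm.le
  have hL : L ≠ 0 := (hm.trans_lt hmL).ne'
  obtain ⟨b, hmb, hbL⟩ := exists_between hmL
  have hg : ContDiff ℝ (⊤ : ℕ∞) (cubeBarrier L n m : (ι → ℝ) → ℝ) := contDiff_cubeBarrier
  obtain ⟨M, hM⟩ := exists_gradNormSq_cubeBarrier_le (ι := ι) (a := n) (b := m) hL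
  obtain ⟨c, hc, hgrad⟩ := exists_gradNormSq_const_mul_sq_le (hg.differentiable (by simp))
    (fun _ => abs_cubeBarrier_le_one) hM G
  refine ⟨c, fun y => ∑ i, periodicPotential L m b (y i), fun y => c * cubeBarrier L n m y ^ 2, hc,
    ContDiff.sum fun i _ => (contDiff_periodicPotential hm hmb hbL).comp (contDiff_apply ℝ ℝ i),
    contDiff_const.mul (hg.pow 2),
    fun y => Finset.sum_nonneg fun i _ => periodicPotential_nonneg hm hmb hbL,
    fun y => by positivity, fun y k => ?_, fun y k => ?_, fun y hy => ?_, fun y hy => ?_,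
    fun y hyL hym => ?_, fun y hy => ?_, hgrad⟩
  · simp only [Pi.add_apply,
      apply_add_mul_int_of_periodic (periodic_periodicPotential hm hmb hbL)]
  · simp only [cubeBarrier_add_mul_int hL]
  · simp only [Finset.sum_div, periodicPotential_eq_sq hmb hbL.le (abs_le.2 (hy _))]
  · exact Classical.skolem.1 fun i => exists_eq_mul_int_of_isLocalMin_periodicPotential
      hm hmb hbL (isLocalMin_of_sum_apply hy i)
  · simp only [cubeBarrier_eq_one hn hnm hyL hym, one_pow, mul_one]
  · simp only [cubeBarrier_eq_zero hnm hmL.le hy, ne_eq, two_ne_zero, not_false_eq_true, zero_pow,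
      mul_zero]

theorem stmt_10 (d : ℕ) (hd : 1 ≤ d) (K L G : ℝ) (hK : 0 < K)
    (hL : Real.sqrt (2 * K) + 2 < L) (hG : 0 ≤ G) :
    ∃ m n : ℝ, ∃ σstar : ℝ, ∃ W σ : (Fin d → ℝ) → ℝ,
      Real.sqrt (2 * K) < n ∧ n < m ∧ m < L ∧ 0 < σstar ∧
      ContDiff ℝ (⊤ : ℕ∞) W ∧ ContDiff ℝ (⊤ : ℕ∞) σ ∧
      (∀ y, 0 ≤ W y) ∧ (∀ y, 0 ≤ σ y) ∧
      -- 2L-periodicity in each coordinate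
      (∀ (y : Fin d → ℝ) (k : Fin d → ℤ), W (y + fun i => 2 * L * (k i)) = W y) ∧
      (∀ (y : Fin d → ℝ) (k : Fin d → ℤ), σ (y + fun i => 2 * L * (k i)) = σ y) ∧
      -- (i) W(y) = |y|²/2 on [-m,m]^d
      (∀ y : Fin d → ℝ, (∀ i, y i ∈ Set.Icc (-m) m) → W y = (∑ i, (y i) ^ 2) / 2) ∧
      -- (ii) every local minimum point of W lies in 2Lℤ^d
      (∀ y : Fin d → ℝ, IsLocalMin W y → ∃ k : Fin d → ℤ, ∀ i, y i = 2 * L * (k i)) ∧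
      -- (iii) σ = σ_* on [-L,L]^d \ [-m,m]^d
      (∀ y : Fin d → ℝ, (∀ i, y i ∈ Set.Icc (-L) L) → ¬ (∀ i, y i ∈ Set.Icc (-m) m) →
        σ y = σstar) ∧
      -- (iv) σ = 0 on [-n,n]^d
      (∀ y : Fin d → ℝ, (∀ i, y i ∈ Set.Icc (-n) n) → σ y = 0) ∧
      -- (v) G·sup|∇σ| ≤ 1/2 and |∇σ|² ≤ σ
      (∀ y : Fin d → ℝ,
        G * Real.sqrt (∑ i, (fderiv ℝ σ y (Pi.single i 1)) ^ 2) ≤ 1 / 2 ∧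
        (∑ i, (fderiv ℝ σ y (Pi.single i 1)) ^ 2) ≤ σ y) := by
  obtain ⟨n, hn, hnL⟩ := exists_between (show √(2 * K) < L by linarith)
  obtain ⟨m, hnm, hmL⟩ := exists_between hnL
  obtain ⟨σstar, W, σ, h⟩ := stmt_10_general (ι := Fin d) ((sqrt_nonneg _).trans hn.le) hnm hmL G
  exact ⟨m, n, σstar, W, σ, hn, hnm, hmL, h⟩
end

section
/- Let T > 0, α > 0, θ ≥ 1 and let g : [0,T] → ℝ be a measurable function with α ≤ g(s) ≤ θα for all s ∈ [0,T]. Then 8 (∫₀ᵀ g(s) ds) (∫₀ᵀ (T−s) (∫₀ˢ g(u) du) ds) − 4 (∫₀ᵀ (∫₀ˢ g(u) du) ds)² ≥ (4/3 − θ²) α² T⁴. -/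
open MeasureTheory intervalIntegral

/-!
Integrating by parts, the left-hand side is `4 (M₀ M₂ - M₁²)`, where `Mₖ = ∫₀ᵀ (T - s)ᵏ g(s) ds`.
This Gram determinant of `1` and `T - s` in `L²(g ds)` is, for a measure of positive mass,
`M₀ · min_c ∫ (T - s - c)² g(s) ds`, and therefore increases with the measure `g ds`. Since
`g ds ≥ α ds`, it is at least its value `α² T⁴ / 12` at `g = α`; and `4 / 3 - θ² ≤ 1 / 3` because
`θ ≥ 1`.
-/

section GramDet

variable {Ω : Type*} [MeasurableSpace Ω] {μ ν : Measure Ω} {f : Ω → ℝ}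

/-- The Gram determinant of `1` and `f` in `L²(μ)`, that is, the squared mass of `μ` times the
variance of `f` under the normalized measure. For `μ = 2 g ds` on `[0, T]` and `f s = T - s` it is
the determinant of the covariance matrix of the Gaussian pair `(X_T, Y_T)`. -/
noncomputable def gramDet (μ : Measure Ω) (f : Ω → ℝ) : ℝ :=
  μ.real Set.univ * ∫ x, f x ^ 2 ∂μ - (∫ x, f x ∂μ) ^ 2

lemma mass_mul_integral_sub_const_sq [IsFiniteMeasure μ] (hf : MemLp f 2 μ) (c : ℝ) :
    μ.real Set.univ * ∫ x, (f x - c) ^ 2 ∂μ =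
      gramDet μ f + (μ.real Set.univ * c - ∫ x, f x ∂μ) ^ 2 := by
  have hf₁ : Integrable f μ := hf.integrable one_le_two
  have hf₂ : Integrable (fun x => f x ^ 2 - 2 * c * f x) μ :=
    hf.integrable_sq.sub (hf₁.const_mul _)
  have expand : ∫ x, (f x - c) ^ 2 ∂μ =
      ∫ x, f x ^ 2 ∂μ - 2 * c * ∫ x, f x ∂μ + μ.real Set.univ * c ^ 2 := by
    calc ∫ x, (f x - c) ^ 2 ∂μ = ∫ x, (f x ^ 2 - 2 * c * f x + c ^ 2) ∂μ := by
          congr 1 with x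
          ring
      _ = _ := by
          rw [MeasureTheory.integral_add hf₂ (integrable_const _),
            MeasureTheory.integral_sub hf.integrable_sq (hf₁.const_mul _),
            MeasureTheory.integral_const_mul, MeasureTheory.integral_const, smul_eq_mul]
  rw [expand, gramDet]
  ring

lemma gramDet_le_mass_mul_integral_sub_const_sq [IsFiniteMeasure μ] (hf : MemLp f 2 μ) (c : ℝ) :
    gramDet μ f ≤ μ.real Set.univ * ∫ x, (f x - c) ^ 2 ∂μ := by
  rw [mass_mul_integral_sub_const_sq hf]
  exact le_add_of_nonneg_right (sq_nonneg _)

lemma gramDet_eq_mass_mul_integral_sub_average_sq [IsFiniteMeasure μ] [NeZero μ]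
    (hf : MemLp f 2 μ) :
    gramDet μ f = μ.real Set.univ * ∫ x, (f x - ⨍ y, f y ∂μ) ^ 2 ∂μ := by
  rw [mass_mul_integral_sub_const_sq hf, ← smul_eq_mul, measure_smul_average]
  simp

lemma gramDet_mono [IsFiniteMeasure μ] (hνμ : ν ≤ μ) (hf : MemLp f 2 μ) :
    gramDet ν f ≤ gramDet μ f := by
  rcases eq_zero_or_neZero μ with rfl | _
  · rw [Measure.nonpos_iff_eq_zero'.1 hνμ]
  have : IsFiniteMeasure ν := isFiniteMeasure_of_le μ hνμ
  set m := ⨍ y, f y ∂μ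
  calc gramDet ν f ≤ ν.real Set.univ * ∫ x, (f x - m) ^ 2 ∂ν :=
        gramDet_le_mass_mul_integral_sub_const_sq (hf.mono_measure hνμ) m
    _ ≤ μ.real Set.univ * ∫ x, (f x - m) ^ 2 ∂μ := by
        gcongr
        · exact ENNReal.toReal_mono (measure_ne_top μ _) (hνμ _)
        · exact ae_of_all _ fun x => sq_nonneg _
        · exact (hf.sub (memLp_const m)).integrable_sq
    _ = gramDet μ f := (gramDet_eq_mass_mul_integral_sub_average_sq hf).symm

lemma gramDet_smul_measure (c : ENNReal) (μ : Measure Ω) (f : Ω → ℝ) :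
    gramDet (c • μ) f = c.toReal ^ 2 * gramDet μ f := by
  simp only [gramDet, measureReal_ennreal_smul_apply, MeasureTheory.integral_smul_measure,
    smul_eq_mul]
  ring

lemma gramDet_withDensity {g : Ω → ℝ} (hg : AEMeasurable g μ) (hg₀ : 0 ≤ᵐ[μ] g) (f : Ω → ℝ) :
    gramDet (μ.withDensity fun x => ENNReal.ofReal (g x)) f =
      (∫ x, g x ∂μ) * (∫ x, f x ^ 2 * g x ∂μ) - (∫ x, f x * g x ∂μ) ^ 2 := by
  have integral_density (φ : Ω → ℝ) :
      ∫ x, φ x ∂μ.withDensity (fun x => ENNReal.ofReal (g x)) = ∫ x, φ x * g x ∂μ := by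
    rw [integral_withDensity_eq_integral_toReal_smul₀ hg.ennreal_ofReal
      (ae_of_all _ fun _ => ENNReal.ofReal_lt_top)]
    refine integral_congr_ae ?_
    filter_upwards [hg₀] with x hx
    rw [ENNReal.toReal_ofReal hx, smul_eq_mul, mul_comm]
  have mass_density :
      (μ.withDensity fun x => ENNReal.ofReal (g x)).real Set.univ = ∫ x, g x ∂μ := by
    simpa using integral_density fun _ => 1
  rw [gramDet, mass_density, integral_density, integral_density]

end GramDet

lemma gramDet_volume_restrict_Ioc {a b : ℝ} (hab : a ≤ b) :
    gramDet (volume.restrict (Set.Ioc a b)) (fun s => b - s) = (b - a) ^ 4 / 12 := by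
  have first_moment : ∫ s in Set.Ioc a b, (b - s) = (b - a) ^ 2 / 2 := by
    rw [← integral_of_le hab, integral_comp_sub_left (fun x => x), integral_id]
    ring
  have second_moment : ∫ s in Set.Ioc a b, (b - s) ^ 2 = (b - a) ^ 3 / 3 := by
    rw [← integral_of_le hab, integral_comp_sub_left (fun x => x ^ 2), integral_pow]
    norm_num
  rw [gramDet, first_moment, second_moment, measureReal_restrict_apply_univ,
    Real.volume_real_Ioc_of_le hab]
  ring

section Interval

variable {a b α : ℝ} {g : ℝ → ℝ}

/- The primitive of `g` is only absolutely continuous, so that the classical integration by parts,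
which asks for a derivative at every point, does not apply. -/
lemma integral_sub_pow_mul_primitive (hg : IntervalIntegrable g volume a b) (n : ℕ) :
    (n + 1) * ∫ s in a..b, (b - s) ^ n * ∫ u in a..s, g u =
      ∫ s in a..b, (b - s) ^ (n + 1) * g s := by
  set G : ℝ → ℝ := fun s => ∫ u in a..s, g u
  have hG : AbsolutelyContinuousOnInterval G a b :=
    hg.absolutelyContinuousOnInterval_intervalIntegral Set.left_mem_uIcc
  have hpow : AbsolutelyContinuousOnInterval (fun s => (b - s) ^ (n + 1)) a b :=
    ContDiffOn.absolutelyContinuousOnInterval (by fun_prop)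
  have deriv_pow (s : ℝ) : deriv (fun s => (b - s) ^ (n + 1)) s = -((n + 1) * (b - s) ^ n) := by
    simpa using (((hasDerivAt_id s).const_sub b).fun_pow (n + 1)).deriv
  have deriv_G : ∀ᵐ s, s ∈ Set.uIoc a b → deriv G s = g s := by
    filter_upwards [hg.ae_hasDerivAt_integral] with s hs hmem
    exact (hs (Set.uIoc_subset_uIcc hmem) a Set.left_mem_uIcc).deriv
  symm
  calc ∫ s in a..b, (b - s) ^ (n + 1) * g s = ∫ s in a..b, (b - s) ^ (n + 1) * deriv G s :=
        integral_congr_ae (deriv_G.mono fun s hs hmem => by rw [hs hmem])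
    _ = -∫ s in a..b, deriv (fun s => (b - s) ^ (n + 1)) s * G s := by
        rw [hpow.integral_mul_deriv_eq_deriv_mul hG]
        simp [G]
    _ = (n + 1) * ∫ s in a..b, (b - s) ^ n * G s := by
        simp only [deriv_pow, neg_mul, mul_assoc, intervalIntegral.integral_neg,
          intervalIntegral.integral_const_mul, neg_neg]

lemma sq_mul_pow_four_div_le_moment_det (hab : a ≤ b) (hα : 0 ≤ α)
    (hg : IntervalIntegrable g volume a b) (hαg : ∀ s ∈ Set.Icc a b, α ≤ g s) :
    α ^ 2 * (b - a) ^ 4 / 12 ≤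
      (∫ s in a..b, g s) * (∫ s in a..b, (b - s) ^ 2 * g s)
        - (∫ s in a..b, (b - s) * g s) ^ 2 := by
  set μ := volume.restrict (Set.Ioc a b)
  set μg := μ.withDensity fun s => ENNReal.ofReal (g s)
  have hgμ : Integrable g μ := hg.1
  have hαg_ae : ∀ᵐ s ∂μ, α ≤ g s :=
    ae_restrict_of_forall_mem measurableSet_Ioc fun s hs => hαg s (Set.Ioc_subset_Icc_self hs)
  have : IsFiniteMeasure μg := isFiniteMeasure_withDensity_ofReal hgμ.2
  have uniform_le : ENNReal.ofReal α • μ ≤ μg := by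
    rw [← withDensity_const]
    exact withDensity_mono (hαg_ae.mono fun s hs => ENNReal.ofReal_le_ofReal hs)
  have memLp_sub : MemLp (fun s => b - s) 2 μg := by
    refine MemLp.of_bound (by fun_prop) (b - a) ?_
    refine (withDensity_absolutelyContinuous μ _).ae_le ?_
    refine ae_restrict_of_forall_mem measurableSet_Ioc fun s hs => ?_
    rw [Real.norm_of_nonneg (sub_nonneg.2 hs.2)]
    exact sub_le_sub_left hs.1.le b
  calc α ^ 2 * (b - a) ^ 4 / 12 = gramDet (ENNReal.ofReal α • μ) (fun s => b - s) := by
        rw [gramDet_smul_measure, ENNReal.toReal_ofReal hα, gramDet_volume_restrict_Ioc hab,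
          mul_div_assoc]
    _ ≤ gramDet μg (fun s => b - s) := gramDet_mono uniform_le memLp_sub
    _ = _ := by
        rw [gramDet_withDensity hgμ.aemeasurable (hαg_ae.mono fun s hs => hα.trans hs)]
        simp only [integral_of_le hab, μ]

lemma intervalIntegrable_of_forall_mem_Icc {m M : ℝ} (hg : Measurable g) (hab : a ≤ b)
    (hbound : ∀ s ∈ Set.Icc a b, m ≤ g s ∧ g s ≤ M) : IntervalIntegrable g volume a b := by
  rw [intervalIntegrable_iff_integrableOn_Icc_of_le hab]
  exact Measure.integrableOn_of_bounded measure_Icc_lt_top.ne hg.aestronglyMeasurable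
    (ae_restrict_of_forall_mem measurableSet_Icc fun s hs =>
      abs_le_max_abs_abs (hbound s hs).1 (hbound s hs).2)

end Interval

theorem stmt_11_general {T α : ℝ} (hT : 0 ≤ T) (hα : 0 ≤ α) {g : ℝ → ℝ}
    (hg : IntervalIntegrable g volume 0 T) (hαg : ∀ s ∈ Set.Icc 0 T, α ≤ g s) :
    1 / 3 * α ^ 2 * T ^ 4 ≤
      8 * (∫ s in (0 : ℝ)..T, g s) *
          (∫ s in (0 : ℝ)..T, (T - s) * ∫ u in (0 : ℝ)..s, g u)
        - 4 * (∫ s in (0 : ℝ)..T, ∫ u in (0 : ℝ)..s, g u) ^ 2 := by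
  have first_moment : ∫ s in (0 : ℝ)..T, ∫ u in (0 : ℝ)..s, g u =
      ∫ s in (0 : ℝ)..T, (T - s) * g s := by
    simpa using integral_sub_pow_mul_primitive hg 0
  have second_moment : 2 * ∫ s in (0 : ℝ)..T, (T - s) * ∫ u in (0 : ℝ)..s, g u =
      ∫ s in (0 : ℝ)..T, (T - s) ^ 2 * g s := by
    simpa [one_add_one_eq_two] using integral_sub_pow_mul_primitive hg 1
  have moment_det := sq_mul_pow_four_div_le_moment_det hT hα hg hαg
  rw [← first_moment, ← second_moment, sub_zero] at moment_det
  linarith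

theorem stmt_11 (T α θ : ℝ) (hT : 0 < T) (hα : 0 < α) (hθ : 1 ≤ θ)
    (g : ℝ → ℝ) (hg : Measurable g)
    (hbound : ∀ s ∈ Set.Icc (0:ℝ) T, α ≤ g s ∧ g s ≤ θ * α) :
    (4 / 3 - θ ^ 2) * α ^ 2 * T ^ 4 ≤
      8 * (∫ s in (0:ℝ)..T, g s) *
          (∫ s in (0:ℝ)..T, (T - s) * ∫ u in (0:ℝ)..s, g u)
        - 4 * (∫ s in (0:ℝ)..T, ∫ u in (0:ℝ)..s, g u) ^ 2 := by
  calc (4 / 3 - θ ^ 2) * α ^ 2 * T ^ 4 ≤ 1 / 3 * α ^ 2 * T ^ 4 := by gcongr; nlinarith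
    _ ≤ _ := stmt_11_general hT.le hα.le (intervalIntegrable_of_forall_mem_Icc hg hT.le hbound)
        fun s hs => (hbound s hs).1
end
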